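/- arXiv:2510.27574 — 2 statements merged into one kernel-verified Lean document; each statement's English description precedes it below -/
import Mathlib

section
/- Let n ≥ 1 and let I = {i_1, i_2, …, i_k} ⊆ [n] with 1 = i_1 < i_2 < ⋯ < i_k ≤ n, and let U = [n] \ I = {u_1 < u_2 < ⋯ < u_{n−k}} be the complementary set of indices. Suppose that I is a lucky set of UFR_n, i.e., there exists at least one unit Fubini ranking β with n competitors whose set of lucky cars is exactly I. Then the number of unit Fubini rankings α with n competitors such that Lucky(α) = I equals k!·∏_{ℓ=1}^{n−k} (u_ℓ − 2ℓ + 1). -/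
/-- A Fubini ranking with `n` competitors: entries are in `[n]` (represented by `Fin n`,
where `i : Fin n` stands for the rank `i.val + 1`), and for every rank `r` occurring among
the entries, the number of indices `j` whose entry is strictly smaller than `r` equals
`r - 1` (i.e. `r.val` in the `Fin n` encoding). -/
def IsFubini {n : ℕ} (α : Fin n → Fin n) : Prop :=
  ∀ r : Fin n, (∃ i, α i = r) →
    (Finset.univ.filter (fun j => α j < r)).card = (r : ℕ)

/-- The set of lucky cars of `α`: car `i` is lucky iff it is the first occurrence of its
value, i.e. `α j ≠ α i` for all `j < i`. -/
def luckySet {n : ℕ} (α : Fin n → Fin n) : Finset (Fin n) :=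
  Finset.univ.filter (fun i => ∀ j, j < i → α j ≠ α i)

/-- The number of lucky cars of `α`. -/
def lucky {n : ℕ} (α : Fin n → Fin n) : ℕ := (luckySet α).card

instance {n : ℕ} : DecidablePred (IsFubini (n := n)) := fun α =>
  inferInstanceAs (Decidable (∀ r : Fin n, (∃ i, α i = r) →
    (Finset.univ.filter (fun j => α j < r)).card = (r : ℕ)))

/-- `α` has every value occurring at most twice among its entries (the "unit" condition:
a unit Fubini ranking is a Fubini ranking in which at most two competitors share a rank). -/
def IsUnit2 {n : ℕ} (α : Fin n → Fin n) : Prop :=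
  ∀ r : Fin n, (Finset.univ.filter (fun i => α i = r)).card ≤ 2

/-!
A Fubini ranking is determined by its tie relation and by the order of its blocks of tied
competitors, and every such pair occurs, so a tie relation with `k` blocks carries `k!` Fubini
rankings. A tie relation is encoded by the map sending each competitor to the least competitor tied
with it; the lucky cars are the fixed points of this map. A unit ranking with lucky set `I` thus
amounts to an ordering of the `#I` blocks and an injection of the unlucky cars into `I` that lowers
every car. Choosing the images of the unlucky cars `u₁ < u₂ < ⋯` in increasing order, the car `u_ℓ`
has `u_ℓ - ℓ` smaller lucky cars, `ℓ - 1` of which are already taken.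
-/

open Finset
open scoped Nat

theorem snoc_mem_piFinset_and_injective_iff {X : Type*} [DecidableEq X] {m : ℕ}
    {A : Fin (m + 1) → Finset X} {g : Fin m → X} {x : X} :
    (Fin.snoc g x : Fin (m + 1) → X) ∈ Fintype.piFinset A ∧
        Function.Injective (Fin.snoc g x : Fin (m + 1) → X) ↔
      (g ∈ Fintype.piFinset (Fin.init A) ∧ Function.Injective g) ∧
        x ∈ A (Fin.last m) \ univ.image g := by
  rw [Fin.mem_piFinset_iff_last_init, Fin.snoc_injective_iff, Fin.snoc_last, Fin.init_snoc,
    mem_sdiff, mem_image_univ_iff_mem_range]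
  tauto

theorem filter_init_eq_image_snoc {X : Type*} [DecidableEq X] {m : ℕ}
    {A : Fin (m + 1) → Finset X} {g : Fin m → X} (hg : g ∈ Fintype.piFinset (Fin.init A))
    (hinj : Function.Injective g) :
    {f ∈ {f ∈ Fintype.piFinset A | Function.Injective f} | Fin.init f = g} =
      (A (Fin.last m) \ univ.image g).image (Fin.snoc (α := fun _ => X) g) := by
  ext f
  rw [mem_filter, mem_filter, mem_image]
  constructor
  · rintro ⟨hf, rfl⟩
    rw [← Fin.snoc_init_self f] at hf
    exact ⟨f (Fin.last m), (snoc_mem_piFinset_and_injective_iff.1 hf).2, Fin.snoc_init_self f⟩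
  · rintro ⟨x, hx, rfl⟩
    exact ⟨snoc_mem_piFinset_and_injective_iff.2 ⟨⟨hg, hinj⟩, hx⟩, Fin.init_snoc _ _⟩

theorem card_filter_injective_piFinset {X : Type*} [DecidableEq X] {m : ℕ}
    {A : Fin m → Finset X} (hA : Monotone A) :
    #{f ∈ Fintype.piFinset A | Function.Injective f} = ∏ l, (#(A l) - l) := by
  induction m with
  | zero => simp [Function.injective_of_subsingleton]
  | succ m ih =>
    let initials : Finset (Fin m → X) :=
      {g ∈ Fintype.piFinset (Fin.init A) | Function.Injective g}
    have init_mem : ∀ f ∈ {f ∈ Fintype.piFinset A | Function.Injective f},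
        (Fin.init f : Fin m → X) ∈ initials := by
      intro f hf
      rw [mem_filter, ← Fin.snoc_init_self f] at hf
      exact mem_filter.2 (snoc_mem_piFinset_and_injective_iff.1 hf).1
    have fiber_card : ∀ g ∈ initials,
        #{f ∈ {f ∈ Fintype.piFinset A | Function.Injective f} | Fin.init f = g} =
          #(A (Fin.last m)) - m := by
      intro g hg
      obtain ⟨hgA, hinj⟩ := mem_filter.1 hg
      have image_subset : univ.image g ⊆ A (Fin.last m) :=
        image_subset_iff.2 fun l _ => hA (Fin.le_last _) (Fintype.mem_piFinset.1 hgA l)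
      rw [filter_init_eq_image_snoc hgA hinj,
        card_image_of_injective _ (Fin.snoc_right_injective _), card_sdiff_of_subset image_subset,
        card_image_of_injective _ hinj, card_univ, Fintype.card_fin]
    have card_initials : #initials = ∏ l : Fin m, (#(A l.castSucc) - l) :=
      ih fun _ _ h => hA (Fin.castSucc_le_castSucc_iff.2 h)
    rw [card_eq_sum_card_fiberwise init_mem, sum_const_nat fiber_card, card_initials,
      Fin.prod_univ_castSucc, Fin.val_last]
    rfl

/-- The map sending each element of a linear order to the leader of its block, for a partition
into blocks of at most two elements whose least elements, the leaders, form the set `I`. Such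
partitions are the tie relations of the unit Fubini rankings with lucky set `I`. -/
structure IsLeaderMap {ι : Type*} [LT ι] (I : Finset ι) (b : ι → ι) : Prop where
  apply_of_mem : ∀ i ∈ I, b i = i
  apply_mem : ∀ i, b i ∈ I
  apply_lt : ∀ i ∉ I, b i < i
  injOn : Set.InjOn b (↑I)ᶜ

namespace IsLeaderMap

variable {ι : Type*} {I : Finset ι} {b : ι → ι}

theorem apply_le [Preorder ι] (hb : IsLeaderMap I b) (i : ι) : b i ≤ i := by
  by_cases hi : i ∈ I
  · exact (hb.apply_of_mem i hi).le
  · exact (hb.apply_lt i hi).le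

theorem apply_eq_self_iff [LT ι] (hb : IsLeaderMap I b) {i : ι} : b i = i ↔ i ∈ I :=
  ⟨fun h => h ▸ hb.apply_mem i, hb.apply_of_mem i⟩

end IsLeaderMap

section LeaderMapCount

variable {ι : Type*} {I : Finset ι} {m : ℕ} {v : Fin m → ι}

theorem IsLeaderMap.extend_comp_eq [LT ι] {b : ι → ι} (hb : IsLeaderMap I b)
    (hv : Function.Injective v) (hrange : Set.range v = (↑I)ᶜ) :
    Function.extend v (b ∘ v) id = b := by
  funext i
  by_cases hi : i ∈ Set.range v
  · obtain ⟨l, rfl⟩ := hi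
    exact hv.extend_apply _ _ l
  · rw [Function.extend_apply' _ _ _ hi]
    exact (hb.apply_of_mem i (by simpa [hrange] using hi)).symm

theorem isLeaderMap_extend_iff [LT ι] {f : Fin m → ι} (hv : Function.Injective v)
    (hrange : Set.range v = (↑I)ᶜ) :
    IsLeaderMap I (Function.extend v f id) ↔
      (∀ l, f l ∈ I ∧ f l < v l) ∧ Function.Injective f := by
  have notMem (l) : v l ∉ I := by simpa using hrange.subset ⟨l, rfl⟩
  have apply_v (l) : Function.extend v f id (v l) = f l := hv.extend_apply f id l
  have apply_of_mem (i) (hi : i ∈ I) : Function.extend v f id i = i :=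
    Function.extend_apply' _ _ _ fun ⟨l, hl⟩ => notMem l (hl ▸ hi)
  have exists_v {i} (hi : i ∉ I) : ∃ l, v l = i := hrange.superset hi
  constructor
  · intro h
    refine ⟨fun l => ⟨?_, ?_⟩, fun l l' hll' => hv (h.injOn (notMem l) (notMem l') ?_)⟩
    · exact apply_v l ▸ h.apply_mem (v l)
    · exact (apply_v l).symm.trans_lt (h.apply_lt (v l) (notMem l))
    · rw [apply_v, apply_v, hll']
  · rintro ⟨hf, hinj⟩
    refine ⟨apply_of_mem, fun i => ?_, fun i hi => ?_, fun i hi j hj hij => ?_⟩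
    · by_cases hi : i ∈ I
      · rwa [apply_of_mem i hi]
      · obtain ⟨l, rfl⟩ := exists_v hi
        exact (apply_v l).symm ▸ (hf l).1
    · obtain ⟨l, rfl⟩ := exists_v hi
      exact (apply_v l).trans_lt (hf l).2
    · obtain ⟨l, rfl⟩ := exists_v hi
      obtain ⟨l', rfl⟩ := exists_v hj
      rw [apply_v, apply_v] at hij
      rw [hinj hij]

theorem card_isLeaderMap [LinearOrder ι] (hv : StrictMono v) (hrange : Set.range v = (↑I)ᶜ) :
    Nat.card {b // IsLeaderMap I b} = ∏ l, (#{i ∈ I | i < v l} - l) := by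
  let restrict : {b // IsLeaderMap I b} ≃
      {f : Fin m → ι // (∀ l, f l ∈ I ∧ f l < v l) ∧ Function.Injective f} :=
    { toFun := fun b => ⟨b.1 ∘ v, (isLeaderMap_extend_iff hv.injective hrange).1
        ((b.2.extend_comp_eq hv.injective hrange).symm ▸ b.2)⟩
      invFun := fun f => ⟨Function.extend v f.1 id,
        (isLeaderMap_extend_iff hv.injective hrange).2 f.2⟩
      left_inv := fun b => Subtype.ext (b.2.extend_comp_eq hv.injective hrange)
      right_inv := fun f => Subtype.ext (Function.extend_comp hv.injective _ _) }
  have chain : Monotone fun l => {i ∈ I | i < v l} := fun _ _ h =>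
    monotone_filter_right I fun _ _ hi => hi.trans_le (hv.monotone h)
  rw [Nat.card_congr restrict, ← card_filter_injective_piFinset chain]
  exact Nat.subtype_card _ (by simp)

end LeaderMapCount

section FirstOccurrence

variable {ι X Y : Type*} [LinearOrder ι] [Fintype ι] [DecidableEq X] [DecidableEq Y]

/-- The least index at which `α` takes the value `α i`. The map `firstOccurrence α` is a canonical
encoding of the tie relation `Setoid.ker α`. -/
def firstOccurrence (α : ι → X) (i : ι) : ι :=
  ({j | α j = α i} : Finset ι).min' ⟨i, by simp⟩

theorem apply_firstOccurrence (α : ι → X) (i : ι) : α (firstOccurrence α i) = α i :=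
  (mem_filter.1 (({j | α j = α i} : Finset ι).min'_mem ⟨i, by simp⟩)).2

theorem firstOccurrence_le {α : ι → X} {i j : ι} (h : α j = α i) : firstOccurrence α i ≤ j :=
  min'_le _ _ (by simpa using h)

theorem firstOccurrence_eq_iff (α : ι → X) (i j : ι) :
    firstOccurrence α i = firstOccurrence α j ↔ α i = α j := by
  refine ⟨fun h => ?_, fun h => by simp only [firstOccurrence, h]⟩
  rw [← apply_firstOccurrence α i, h, apply_firstOccurrence α j]

theorem firstOccurrence_eq_firstOccurrence_iff {α : ι → X} {β : ι → Y} :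
    firstOccurrence α = firstOccurrence β ↔ Setoid.ker α = Setoid.ker β := by
  refine ⟨fun h => Setoid.ext fun i j => ?_, fun h => funext fun i => ?_⟩
  · rw [Setoid.ker_def, Setoid.ker_def, ← firstOccurrence_eq_iff α, h, firstOccurrence_eq_iff]
  · have same_ties (j) : α j = α i ↔ β j = β i := Setoid.ext_iff.1 h j i
    simp only [firstOccurrence, same_ties]

theorem IsLeaderMap.firstOccurrence_eq {I : Finset ι} {b : ι → ι} (hb : IsLeaderMap I b) :
    firstOccurrence b = b := by
  funext i
  refine le_antisymm (firstOccurrence_le (hb.apply_of_mem _ (hb.apply_mem i))) ?_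
  exact (apply_firstOccurrence b i).symm.trans_le (hb.apply_le _)

end FirstOccurrence

section UnitRankings

variable {n : ℕ} {α : Fin n → Fin n}

theorem mem_luckySet_iff {i : Fin n} : i ∈ luckySet α ↔ firstOccurrence α i = i := by
  simp only [luckySet, mem_filter, mem_univ, true_and]
  constructor
  · intro h
    refine (firstOccurrence_le rfl).eq_of_not_lt fun hlt => ?_
    exact h _ hlt (apply_firstOccurrence α i)
  · intro h j hj hji
    exact (h.symm.trans_le (firstOccurrence_le hji)).not_gt hj

theorem firstOccurrence_mem_luckySet (i : Fin n) : firstOccurrence α i ∈ luckySet α :=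
  mem_luckySet_iff.2 ((firstOccurrence_eq_iff α _ _).2 (apply_firstOccurrence α i))

theorem card_filter_apply_eq (i : Fin n) :
    #{j | α j = α i} = 1 + #{j | α j = α i ∧ j ∉ luckySet α} := by
  have lucky_tied :
      ({j | α j = α i ∧ j ∈ luckySet α} : Finset (Fin n)) = {firstOccurrence α i} := by
    ext j
    simp only [mem_filter, mem_univ, true_and, mem_singleton]
    constructor
    · rintro ⟨hji, hj⟩
      rw [← mem_luckySet_iff.1 hj, firstOccurrence_eq_iff, hji]
    · rintro rfl
      exact ⟨apply_firstOccurrence α i, firstOccurrence_mem_luckySet i⟩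
  rw [← card_filter_add_card_filter_not (· ∈ luckySet α), filter_filter, filter_filter, lucky_tied,
    card_singleton]

theorem isUnit2_iff_injOn : IsUnit2 α ↔ Set.InjOn (firstOccurrence α) (↑(luckySet α))ᶜ := by
  constructor
  · intro h i hi j hj hij
    have hcard : #{j | α j = α i ∧ j ∉ luckySet α} ≤ 1 := by
      have := h (α i)
      rw [card_filter_apply_eq] at this
      omega
    refine card_le_one.1 hcard i ?_ j ?_
    · simpa using hi
    · simpa [((firstOccurrence_eq_iff α i j).1 hij).symm] using hj
  · intro h r
    rcases ({j | α j = r} : Finset (Fin n)).eq_empty_or_nonempty with hr | ⟨i, hi⟩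
    · simp [hr]
    obtain rfl : α i = r := by simpa using hi
    have hcard : #{j | α j = α i ∧ j ∉ luckySet α} ≤ 1 := by
      refine card_le_one.2 fun j hj j' hj' => ?_
      simp only [mem_filter, mem_univ, true_and] at hj hj'
      exact h hj.2 hj'.2 ((firstOccurrence_eq_iff α j j').2 (hj.1.trans hj'.1.symm))
    rw [card_filter_apply_eq]
    omega

theorem isLeaderMap_firstOccurrence_iff {I : Finset (Fin n)} :
    IsLeaderMap I (firstOccurrence α) ↔ IsUnit2 α ∧ luckySet α = I := by
  constructor
  · intro h
    obtain rfl : luckySet α = I := by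
      ext i
      rw [mem_luckySet_iff, h.apply_eq_self_iff]
    exact ⟨isUnit2_iff_injOn.2 h.injOn, rfl⟩
  · rintro ⟨hα, rfl⟩
    refine ⟨fun i => mem_luckySet_iff.1, firstOccurrence_mem_luckySet, fun i hi => ?_,
      isUnit2_iff_injOn.1 hα⟩
    exact (firstOccurrence_le rfl).lt_of_ne (mt mem_luckySet_iff.2 hi)

end UnitRankings

section ScoreRanking

variable {n : ℕ} {X : Type*} [LinearOrder X]

/-- The Fubini ranking of competitors with scores `s`, the smallest score being the best: the
(zero-based) rank of a competitor is the number of competitors with a smaller score. -/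
def scoreRanking (s : Fin n → X) (i : Fin n) : Fin n :=
  ⟨#{j | s j < s i}, by
    simpa using card_lt_univ_of_notMem (s := ({j | s j < s i} : Finset (Fin n))) (x := i) (by simp)⟩

theorem scoreRanking_lt_iff (s : Fin n → X) (i j : Fin n) :
    scoreRanking s i < scoreRanking s j ↔ s i < s j := by
  have mono {i j : Fin n} (h : s i ≤ s j) : scoreRanking s i ≤ scoreRanking s j :=
    Fin.mk_le_mk.2 <| card_le_card <| monotone_filter_right _ fun _ _ hx => lt_of_lt_of_le hx h
  refine ⟨fun h => not_le.1 fun h' => (mono h').not_gt h, fun h => Fin.mk_lt_mk.2 ?_⟩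
  refine card_lt_card ((ssubset_iff_of_subset ?_).2 ⟨i, ?_⟩)
  · exact monotone_filter_right _ fun _ _ hx => lt_trans hx h
  · simp [h]

theorem isFubini_scoreRanking (s : Fin n → X) : IsFubini (scoreRanking s) := by
  rintro _ ⟨i, rfl⟩
  simp only [scoreRanking_lt_iff]
  rfl

theorem IsFubini.scoreRanking_eq_iff {α : Fin n → Fin n} (hα : IsFubini α) {s : Fin n → X} :
    scoreRanking s = α ↔ ∀ i j, s i < s j ↔ α i < α j := by
  refine ⟨?_, fun h => ?_⟩
  · rintro rfl i j
    exact (scoreRanking_lt_iff s i j).symm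
  · ext i
    rw [← hα (α i) ⟨i, rfl⟩]
    simp only [scoreRanking, h]

theorem ker_scoreRanking (s : Fin n → X) : Setoid.ker (scoreRanking s) = Setoid.ker s := by
  ext i j
  simp only [Setoid.ker_def, eq_iff_le_not_lt, ← not_lt, scoreRanking_lt_iff]

end ScoreRanking

theorem existsUnique_equiv_fin_lt_iff {ι X : Type*} [Finite ι] [LinearOrder X] {g : ι → X}
    (hg : Function.Injective g) :
    ∃! σ : ι ≃ Fin (Nat.card ι), ∀ i j, σ i < σ j ↔ g i < g j := by
  have := Fintype.ofFinite ι
  let := LinearOrder.lift' g hg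
  let e : ι ≃o Fin (Nat.card ι) :=
    (Fintype.orderIsoFinOfCardEq ι Nat.card_eq_fintype_card.symm).symm
  refine ⟨e.toEquiv, fun i j => e.lt_iff_lt, fun σ hσ => ?_⟩
  let e' : ι ≃o Fin (Nat.card ι) := ⟨σ, fun {i j} => by
    rw [← not_lt, ← not_lt]; exact not_congr (hσ j i)⟩
  exact congrArg RelIso.toEquiv (Subsingleton.elim e' e)

theorem IsFubini.existsUnique_scoreRanking_eq {n : ℕ} {α : Fin n → Fin n} (hα : IsFubini α)
    {ι : Type*} {p : Fin n → ι} (hp : Function.Surjective p) (hker : Setoid.ker α = Setoid.ker p) :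
    ∃! σ : ι ≃ Fin (Nat.card ι), scoreRanking (σ ∘ p) = α := by
  have := Finite.of_surjective p hp
  have apply_eq_iff (i j) : α i = α j ↔ p i = p j := Setoid.ext_iff.1 hker i j
  let rankOf : ι → Fin n := α ∘ Function.surjInv hp
  have rankOf_apply (i) : rankOf (p i) = α i := (apply_eq_iff _ _).2 (Function.surjInv_eq hp _)
  have rankOf_injective : Function.Injective rankOf := by
    refine hp.forall₂.2 fun i j hij => ?_
    rwa [rankOf_apply, rankOf_apply, apply_eq_iff] at hij
  simpa only [hα.scoreRanking_eq_iff, Function.comp_apply, hp.forall, rankOf_apply]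
    using existsUnique_equiv_fin_lt_iff rankOf_injective

theorem card_isFubini_ker_eq {n : ℕ} {ι : Type*} {p : Fin n → ι} (hp : Function.Surjective p) :
    Nat.card {α : Fin n → Fin n // IsFubini α ∧ Setoid.ker α = Setoid.ker p} = (Nat.card ι)! := by
  classical
  have := Finite.of_surjective p hp
  have := Fintype.ofFinite ι
  have ker_comp (σ : ι ≃ Fin (Nat.card ι)) :
      Setoid.ker (scoreRanking (σ ∘ p)) = Setoid.ker p := by
    rw [ker_scoreRanking]
    ext i j
    simp [Setoid.ker_def]
  let rankingOf (σ : ι ≃ Fin (Nat.card ι)) :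
      {α : Fin n → Fin n // IsFubini α ∧ Setoid.ker α = Setoid.ker p} :=
    ⟨scoreRanking (σ ∘ p), isFubini_scoreRanking _, ker_comp σ⟩
  have rankingOf_bijective : Function.Bijective rankingOf :=
    (Function.bijective_iff_existsUnique _).2 fun ⟨α, hα, hker⟩ => by
      simpa only [rankingOf, Subtype.mk.injEq] using hα.existsUnique_scoreRanking_eq hp hker
  rw [← Nat.card_eq_of_bijective rankingOf rankingOf_bijective, Nat.card_eq_fintype_card,
    Fintype.card_equiv (Finite.equivFin ι), Nat.card_eq_fintype_card]

section LuckySetCount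

variable {n : ℕ} {I : Finset (Fin n)}

theorem IsLeaderMap.card_isFubini_firstOccurrence_eq {b : Fin n → Fin n} (hb : IsLeaderMap I b) :
    Nat.card {α : Fin n → Fin n // IsFubini α ∧ firstOccurrence α = b} = (#I)! := by
  let leader (i : Fin n) : I := ⟨b i, hb.apply_mem i⟩
  have leader_surjective : Function.Surjective leader :=
    fun i => ⟨i, Subtype.ext (hb.apply_of_mem i i.2)⟩
  have ker_leader : Setoid.ker leader = Setoid.ker b := by
    ext i j
    simp [leader, Setoid.ker_def]
  have tie_relation (α : Fin n → Fin n) :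
      firstOccurrence α = b ↔ Setoid.ker α = Setoid.ker leader := by
    rw [ker_leader, ← firstOccurrence_eq_firstOccurrence_iff, hb.firstOccurrence_eq]
  simp only [tie_relation]
  rw [card_isFubini_ker_eq leader_surjective, Nat.card_eq_finsetCard]

theorem card_unitFubini_luckySet_eq (I : Finset (Fin n)) :
    Nat.card {α : Fin n → Fin n // IsFubini α ∧ IsUnit2 α ∧ luckySet α = I} =
      (#I)! * Nat.card {b // IsLeaderMap I b} := by
  classical
  let splitTies : {α : Fin n → Fin n // IsFubini α ∧ IsLeaderMap I (firstOccurrence α)} ≃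
      Σ b : {b // IsLeaderMap I b}, {α : Fin n → Fin n // IsFubini α ∧ firstOccurrence α = b} :=
    { toFun := fun α => ⟨⟨firstOccurrence α.1, α.2.2⟩, α.1, α.2.1, rfl⟩
      invFun := fun x => ⟨x.2.1, x.2.2.1, x.2.2.2.symm ▸ x.1.2⟩
      left_inv := fun _ => rfl
      right_inv := by
        rintro ⟨⟨b, _⟩, α, _, h⟩
        obtain rfl : firstOccurrence α = b := h
        rfl }
  simp only [← isLeaderMap_firstOccurrence_iff]
  rw [Nat.card_congr splitTies, Nat.card_sigma,
    sum_const_nat fun b _ => b.2.card_isFubini_firstOccurrence_eq, card_univ,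
    ← Nat.card_eq_fintype_card, mul_comm]

theorem card_filter_lt_add_eq {m : ℕ} {v : Fin m → Fin n} (hv : StrictMono v)
    (hrange : Set.range v = (↑I)ᶜ) (l : Fin m) : #{i ∈ I | i < v l} + l = v l := by
  have lucky_below : {i ∈ Iio (v l) | i ∈ I} = {i ∈ I | i < v l} := by
    ext i
    simp [and_comm]
  have unlucky_below : {i ∈ Iio (v l) | i ∉ I} = (Iio l).image v := by
    ext i
    have : i ∉ I ↔ ∃ l, v l = i := (Set.ext_iff.1 hrange i).symm
    simp only [mem_filter, mem_Iio, this, mem_image]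
    constructor
    · rintro ⟨h, l', rfl⟩
      exact ⟨l', hv.lt_iff_lt.1 h, rfl⟩
    · rintro ⟨l', h, rfl⟩
      exact ⟨hv h, l', rfl⟩
  calc #{i ∈ I | i < v l} + l = #{i ∈ Iio (v l) | i ∈ I} + #{i ∈ Iio (v l) | i ∉ I} := by
        rw [lucky_below, unlucky_below, card_image_of_injective _ hv.injective, Fin.card_Iio]
    _ = v l := by rw [card_filter_add_card_filter_not, Fin.card_Iio]

theorem card_unitFubini_luckySet_eq_prod {m : ℕ} {v : Fin m → Fin n} (hv : StrictMono v)
    (hrange : Set.range v = (↑I)ᶜ) :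
    Nat.card {α : Fin n → Fin n // IsFubini α ∧ IsUnit2 α ∧ luckySet α = I} =
      (#I)! * ∏ l, ((v l : ℕ) - 2 * l) := by
  rw [card_unitFubini_luckySet_eq, card_isLeaderMap hv hrange]
  congr! 2 with l
  have := card_filter_lt_add_eq hv hrange l
  omega

end LuckySetCount

theorem eq_of_strictMono_of_range_subset {X : Type*} [LinearOrder X] {m : ℕ} {f g : Fin m → X}
    (hf : StrictMono f) (hg : StrictMono g) (h : Set.range f ⊆ Set.range g) : f = g := by
  have hcard : #(univ.image g) = m := by
    rw [card_image_of_injective _ hg.injective, card_univ, Fintype.card_fin]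
  rw [orderEmbOfFin_unique hcard (fun l => by simpa using h ⟨l, rfl⟩) hf,
    ← orderEmbOfFin_unique hcard (fun l => by simp) hg]

-- The truncated subtraction is harmless: the first `ℓ` with `u ℓ < 2 * ℓ`, if any, has
-- `u ℓ = 2 * ℓ - 1`, so its factor is `0` already in `ℤ`.
theorem card_unit_fubini_fixed_lucky_set_general {n k : ℕ} {I : Finset (Fin n)} (hI : #I = k)
    {u : ℕ → ℕ} (humono : ∀ a b : ℕ, 1 ≤ a → a < b → b ≤ n - k → u a < u b)
    (hUdesc : ∀ m : Fin n, m ∉ I ↔ ∃ ℓ : ℕ, 1 ≤ ℓ ∧ ℓ ≤ n - k ∧ (m : ℕ) + 1 = u ℓ) :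
    Nat.card {α : Fin n → Fin n // IsFubini α ∧ IsUnit2 α ∧ luckySet α = I} =
      k ! * ∏ ℓ ∈ Icc 1 (n - k), (u ℓ + 1 - 2 * ℓ) := by
  have hcard : #Iᶜ = n - k := by rw [card_compl, Fintype.card_fin, hI]
  let v : Fin (n - k) ↪o Fin n := Iᶜ.orderEmbOfFin hcard
  have hrange : Set.range v = (↑I)ᶜ := by rw [range_orderEmbOfFin, coe_compl]
  have v_add_one : (fun l => (v l : ℕ) + 1) = fun l : Fin (n - k) => u (l + 1) := by
    refine eq_of_strictMono_of_range_subset (fun _ _ h => Nat.succ_lt_succ (v.strictMono h))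
      (fun a b h => humono _ _ (by omega) (Nat.succ_lt_succ h) b.2) ?_
    rintro _ ⟨l, rfl⟩
    obtain ⟨ℓ, hℓ, hℓm, h⟩ := (hUdesc (v l)).1 (by simpa using hrange.subset ⟨l, rfl⟩)
    exact ⟨⟨ℓ - 1, by omega⟩, by simpa [Nat.sub_add_cancel hℓ] using h.symm⟩
  have prod_eq : ∏ ℓ ∈ Icc 1 (n - k), (u ℓ + 1 - 2 * ℓ) = ∏ l, ((v l : ℕ) - 2 * l) := by
    rw [← Ico_add_one_right_eq_Icc, prod_Ico_eq_prod_range, ← Fin.prod_univ_eq_prod_range]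
    refine prod_congr rfl fun l _ => ?_
    have := congrFun v_add_one l
    grind
  rw [card_unitFubini_luckySet_eq_prod v.strictMono hrange, hI, prod_eq]

/-- Let `I ⊆ [n]` contain car `1`, with `|I| = k`, and let
`u₁ < u₂ < ⋯ < u_{n−k}` enumerate the car numbers (in `{1,…,n}`) of the complement
`U = [n] \ I`. If `I` is a lucky set of `UFR_n` (some unit Fubini ranking has lucky set
exactly `I`), then the number of unit Fubini rankings with `n` competitors whose lucky
set is exactly `I` equals `k! · ∏_{ℓ=1}^{n−k} (u_ℓ − 2ℓ + 1)`.
Here a car index `m : Fin n` corresponds to the car number `m + 1`, and the factor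
`u_ℓ − 2ℓ + 1` is written as `u ℓ + 1 - 2*ℓ` in `ℕ`. -/
theorem card_unit_fubini_fixed_lucky_set (n k : ℕ) (hn : 1 ≤ n) (hk : 1 ≤ k)
    (I : Finset (Fin n)) (hI : I.card = k) (h1 : (⟨0, hn⟩ : Fin n) ∈ I)
    (u : ℕ → ℕ)
    (humono : ∀ a b : ℕ, 1 ≤ a → a < b → b ≤ n - k → u a < u b)
    (hUdesc : ∀ m : Fin n, m ∉ I ↔ ∃ ℓ : ℕ, 1 ≤ ℓ ∧ ℓ ≤ n - k ∧ (m : ℕ) + 1 = u ℓ)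
    (hadm : ∃ β : Fin n → Fin n, IsFubini β ∧ IsUnit2 β ∧ luckySet β = I) :
    Nat.card {α : Fin n → Fin n // IsFubini α ∧ IsUnit2 α ∧ luckySet α = I}
      = Nat.factorial k * ∏ ℓ ∈ Finset.Icc 1 (n - k), (u ℓ + 1 - 2 * ℓ) := by
  exact card_unit_fubini_fixed_lucky_set_general hI humono hUdesc
end

section
/- Let n ≥ 1 and let I = {i_1, i_2, …, i_k} ⊆ [n] with 1 = i_1 < i_2 < ⋯ < i_k ≤ n, and set i_{k+1} = n+1. Then there exists a weakly increasing unit Fubini ranking α ∈ UFR_n^↑ whose set of lucky cars is exactly I if and only if i_{j+1} − i_j ≤ 2 for all j ∈ {1,…,k}; moreover, when this condition holds, such an α is unique (and necessarily |I| ≥ ⌈n/2⌉). -/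
/-!
In a weakly increasing tuple the entries strictly below the value of a lucky car `m` are exactly
those in the positions before `m`, so the Fubini condition says that every lucky car `m` has rank
`m`. Hence a weakly increasing Fubini ranking sends each car to the last lucky car not after it,
and is determined by its lucky set, which can be any set containing the first car. The cars tied
with the lucky car `i_j` are then `i_j, …, i_{j+1} - 1`, so no rank is used three times exactly
when all the differences `i_{j+1} - i_j` are at most two.
-/

open Finset

section RoundsDownTo

variable {ι : Type*}

/-- `f` rounds down to `I`: it sends every `m` to the greatest element of `I` that is at most `m`.
This describes the weakly increasing Fubini rankings with lucky set `I`. -/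
def RoundsDownTo [Preorder ι] (f : ι → ι) (I : Set ι) : Prop :=
  ∀ m, IsGreatest (I ∩ Set.Iic m) (f m)

namespace RoundsDownTo

variable {f g : ι → ι} {I : Set ι}

section Preorder

variable [Preorder ι]

theorem apply_mem (hf : RoundsDownTo f I) (m : ι) : f m ∈ I :=
  (hf m).1.1

theorem apply_le (hf : RoundsDownTo f I) (m : ι) : f m ≤ m :=
  (hf m).1.2

theorem le_apply (hf : RoundsDownTo f I) {l m : ι} (hl : l ∈ I) (hlm : l ≤ m) : l ≤ f m :=
  (hf m).2 ⟨hl, hlm⟩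

theorem monotone (hf : RoundsDownTo f I) : Monotone f :=
  fun a _ hab => hf.le_apply (hf.apply_mem a) ((hf.apply_le a).trans hab)

end Preorder

section PartialOrder

variable [PartialOrder ι]

theorem apply_eq_self (hf : RoundsDownTo f I) {m : ι} (hm : m ∈ I) : f m = m :=
  (hf.apply_le m).antisymm (hf.le_apply hm le_rfl)

theorem unique (hf : RoundsDownTo f I) (hg : RoundsDownTo g I) : f = g :=
  funext fun m => (hf m).unique (hg m)

end PartialOrder

end RoundsDownTo

theorem exists_roundsDownTo [LinearOrder ι] [SuccOrder ι] [IsSuccArchimedean ι] {I : Set ι}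
    (hI : ∀ m, (I ∩ Set.Iic m).Nonempty) : ∃ f, RoundsDownTo f I := by
  choose f hf using fun m =>
    (bddAbove_Iic.mono Set.inter_subset_right).exists_isGreatest_of_nonempty (hI m)
  exact ⟨f, hf⟩

end RoundsDownTo

section LuckySet

variable {n : ℕ} {α : Fin n → Fin n} {I : Finset (Fin n)}

theorem mem_luckySet {m : Fin n} : m ∈ luckySet α ↔ ∀ j < m, α j ≠ α m := by
  simp [luckySet]

theorem exists_mem_luckySet_le_apply_eq (α : Fin n → Fin n) (m : Fin n) :
    ∃ l ∈ luckySet α, l ≤ m ∧ α l = α m := by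
  obtain ⟨l, hlm, hl⟩ := exists_minimal_le_of_wellFoundedLT (fun j => α j = α m) m rfl
  have hlucky : l ∈ luckySet α := mem_luckySet.2 fun j hj h =>
    hl.not_prop_of_lt hj (h.trans hl.prop)
  exact ⟨l, hlucky, hlm, hl.prop⟩

theorem filter_apply_lt_eq_Iio_of_mem_luckySet (hα : Monotone α) {m : Fin n}
    (hm : m ∈ luckySet α) : univ.filter (fun j => α j < α m) = Iio m := by
  ext j
  simp only [mem_filter_univ, mem_Iio]
  exact ⟨hα.reflect_lt, fun hj => (hα hj.le).lt_of_ne (mem_luckySet.1 hm j hj)⟩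

theorem isFubini_iff_forall_mem_luckySet_apply_eq_self (hα : Monotone α) :
    IsFubini α ↔ ∀ m ∈ luckySet α, α m = m := by
  have hcard : ∀ m ∈ luckySet α, #(univ.filter fun j => α j < α m) = m := fun m hm => by
    rw [filter_apply_lt_eq_Iio_of_mem_luckySet hα hm, Fin.card_Iio]
  constructor
  · exact fun hfub m hm => Fin.ext ((hfub (α m) ⟨m, rfl⟩).symm.trans (hcard m hm))
  · rintro hself r ⟨m, rfl⟩
    obtain ⟨l, hl, -, hlm⟩ := exists_mem_luckySet_le_apply_eq α m
    rw [← hlm, hcard l hl, hself l hl]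

theorem IsFubini.roundsDownTo_luckySet (hfub : IsFubini α) (hα : Monotone α) :
    RoundsDownTo α (luckySet α) := by
  have hself := (isFubini_iff_forall_mem_luckySet_apply_eq_self hα).1 hfub
  intro m
  obtain ⟨l, hl, hlm, heq⟩ := exists_mem_luckySet_le_apply_eq α m
  rw [← heq, hself l hl]
  refine ⟨⟨hl, hlm⟩, fun l' ⟨hl', hl'm⟩ => ?_⟩
  calc l' = α l' := (hself l' hl').symm
    _ ≤ α m := hα hl'm
    _ = l := heq.symm.trans (hself l hl)

theorem RoundsDownTo.luckySet_eq (hα : RoundsDownTo α I) : luckySet α = I := by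
  ext m
  rw [mem_luckySet]
  constructor
  · intro hm
    have hfix : α (α m) = α m := hα.apply_eq_self (hα.apply_mem m)
    have heq : α m = m := (hα.apply_le m).eq_of_not_lt fun hlt => hm (α m) hlt hfix
    exact heq ▸ hα.apply_mem m
  · intro hm j hj
    rw [hα.apply_eq_self hm]
    exact ((hα.apply_le j).trans_lt hj).ne

theorem RoundsDownTo.isFubini (hα : RoundsDownTo α I) : IsFubini α :=
  (isFubini_iff_forall_mem_luckySet_apply_eq_self hα.monotone).2 fun _ hm =>
    hα.apply_eq_self (hα.luckySet_eq ▸ hm)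

theorem isFubini_and_monotone_and_luckySet_eq_iff_roundsDownTo :
    IsFubini α ∧ Monotone α ∧ luckySet α = I ↔ RoundsDownTo α I := by
  constructor
  · rintro ⟨hfub, hmono, rfl⟩
    exact hfub.roundsDownTo_luckySet hmono
  · exact fun hα => ⟨hα.isFubini, hα.monotone, hα.luckySet_eq⟩

theorem IsUnit2.le_two_mul_card (hα : IsUnit2 α) (hmem : ∀ m, α m ∈ I) : n ≤ 2 * #I := by
  simpa using card_le_mul_card_image_of_maps_to (s := univ) (fun m _ => hmem m) 2 fun r _ => hα r

end LuckySet

/-- `i 1 < ⋯ < i k` are the car numbers of the elements of `I`, starting from `i 1 = 1`, and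
`i (k + 1)` is the sentinel `n + 1`. Car numbers start from one: `m : Fin n` has number `m + 1`. -/
structure EnumeratesCars {n : ℕ} (i : ℕ → ℕ) (k : ℕ) (I : Finset (Fin n)) : Prop where
  strictMonoOn : StrictMonoOn i (Set.Icc 1 (k + 1))
  apply_one : i 1 = 1
  apply_last : i (k + 1) = n + 1
  mem_iff : ∀ m : Fin n, m ∈ I ↔ ∃ j, 1 ≤ j ∧ j ≤ k ∧ (m : ℕ) + 1 = i j

namespace EnumeratesCars

variable {n k : ℕ} {i : ℕ → ℕ} {I : Finset (Fin n)}

theorem nonempty_inter_Iic (hi : EnumeratesCars i k I) (m : Fin n) :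
    ((I : Set (Fin n)) ∩ Set.Iic m).Nonempty := by
  have hn : 0 < n := m.pos
  have hk : k ≠ 0 := by
    rintro rfl
    have := hi.apply_one.symm.trans hi.apply_last
    omega
  have hzero : (⟨0, hn⟩ : Fin n) ∈ I :=
    (hi.mem_iff _).2 ⟨1, le_rfl, Nat.one_le_iff_ne_zero.2 hk, hi.apply_one.symm⟩
  exact ⟨_, hzero, Nat.zero_le m⟩

theorem exists_val_add_one_eq (hi : EnumeratesCars i k I) {j : ℕ} (hj : 1 ≤ j) (hjk : j ≤ k) :
    ∃ r : Fin n, (r : ℕ) + 1 = i j := by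
  have hlow : i 1 ≤ i j := (hi.strictMonoOn.le_iff_le (by simp) ⟨hj, by omega⟩).2 hj
  have hhigh : i j < i (k + 1) := hi.strictMonoOn ⟨hj, by omega⟩ (by simp) (by omega)
  rw [hi.apply_one] at hlow
  rw [hi.apply_last] at hhigh
  exact ⟨⟨i j - 1, by omega⟩, Nat.sub_add_cancel hlow⟩

theorem exists_mem_Ioc_iff_le (hi : EnumeratesCars i k I) {j : ℕ} (hj : 1 ≤ j) (hjk : j ≤ k)
    {r : Fin n} (hr : (r : ℕ) + 1 = i j) (m : Fin n) :
    (∃ l ∈ I, l ∈ Ioc r m) ↔ i (j + 1) ≤ m + 1 := by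
  have hj' : j ∈ Set.Icc 1 (k + 1) := ⟨hj, by omega⟩
  have hsucc : j + 1 ∈ Set.Icc 1 (k + 1) := ⟨by omega, by omega⟩
  simp only [mem_Ioc, Fin.lt_def, Fin.le_def]
  constructor
  · rintro ⟨l, hl, hrl, hlm⟩
    obtain ⟨p, hp, hpk, hlp⟩ := (hi.mem_iff l).1 hl
    have hp' : p ∈ Set.Icc 1 (k + 1) := ⟨hp, by omega⟩
    have hjp : j < p := (hi.strictMonoOn.lt_iff_lt hj' hp').1 (by omega)
    have hle : i (j + 1) ≤ i p := (hi.strictMonoOn.le_iff_le hsucc hp').2 hjp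
    omega
  · intro hle
    have hjk' : j + 1 ≤ k := by
      by_contra hlt
      obtain rfl : j = k := by omega
      have := hi.apply_last
      omega
    obtain ⟨l, hl⟩ := hi.exists_val_add_one_eq (by omega) hjk'
    have hlt : i j < i (j + 1) := hi.strictMonoOn hj' hsucc (by omega)
    exact ⟨l, (hi.mem_iff l).2 ⟨j + 1, by omega, hjk', hl⟩, by omega, by omega⟩

theorem apply_eq_iff_le_and_lt (hi : EnumeratesCars i k I) {α : Fin n → Fin n}
    (hα : RoundsDownTo α I) {j : ℕ} (hj : 1 ≤ j) (hjk : j ≤ k) {r : Fin n}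
    (hr : (r : ℕ) + 1 = i j) (m : Fin n) :
    α m = r ↔ i j ≤ m + 1 ∧ (m : ℕ) + 1 < i (j + 1) := by
  have hrI : r ∈ I := (hi.mem_iff r).2 ⟨j, hj, hjk, hr⟩
  have hrm : i j ≤ m + 1 ↔ r ≤ m := by rw [← hr, Nat.add_le_add_iff_right, Fin.le_def]
  rw [hrm, ← not_le, ← hi.exists_mem_Ioc_iff_le hj hjk hr m]
  constructor
  · rintro rfl
    refine ⟨hα.apply_le m, fun ⟨l, hl, hlm⟩ => ?_⟩
    rw [mem_Ioc] at hlm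
    exact hlm.1.not_ge (hα.le_apply hl hlm.2)
  · rintro ⟨hle, hnext⟩
    refine ((hα.le_apply hrI hle).eq_of_not_lt fun hlt => hnext ?_).symm
    exact ⟨α m, hα.apply_mem m, mem_Ioc.2 ⟨hlt, hα.apply_le m⟩⟩

theorem card_filter_apply_eq (hi : EnumeratesCars i k I) {α : Fin n → Fin n}
    (hα : RoundsDownTo α I) {j : ℕ} (hj : 1 ≤ j) (hjk : j ≤ k) {r : Fin n}
    (hr : (r : ℕ) + 1 = i j) : #(univ.filter fun m => α m = r) = i (j + 1) - i j := by
  have hle : i (j + 1) ≤ n + 1 := by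
    rw [← hi.apply_last]
    exact (hi.strictMonoOn.le_iff_le ⟨by omega, by omega⟩ (by simp)).2 (by omega)
  have hblock : (univ.filter fun m => α m = r) =
      (Ico (r : ℕ) (i (j + 1) - 1)).attachFin fun m hm => by rw [mem_Ico] at hm; omega := by
    ext m
    rw [mem_filter_univ, hi.apply_eq_iff_le_and_lt hα hj hjk hr, mem_attachFin, mem_Ico]
    omega
  rw [hblock, card_attachFin, Nat.card_Ico]
  omega

theorem isUnit2_iff_forall_sub_le_two (hi : EnumeratesCars i k I) {α : Fin n → Fin n}
    (hα : RoundsDownTo α I) :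
    IsUnit2 α ↔ ∀ j, 1 ≤ j → j ≤ k → i (j + 1) - i j ≤ 2 := by
  constructor
  · intro hunit j hj hjk
    obtain ⟨r, hr⟩ := hi.exists_val_add_one_eq hj hjk
    exact hi.card_filter_apply_eq hα hj hjk hr ▸ hunit r
  · intro hgap r
    by_cases hrI : r ∈ I
    · obtain ⟨j, hj, hjk, hr⟩ := (hi.mem_iff r).1 hrI
      exact hi.card_filter_apply_eq hα hj hjk hr ▸ hgap j hj hjk
    · have hempty : (univ.filter fun m => α m = r) = ∅ :=
        filter_false_of_mem fun m _ (hm : α m = r) => hrI (hm ▸ hα.apply_mem m)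
      simp [hempty]

end EnumeratesCars

/-- Let `I ⊆ [n]` with car numbers `1 = i₁ < i₂ < ⋯ < i_k`, and set
`i_{k+1} = n + 1`. There exists a weakly increasing unit Fubini ranking with `n`
competitors whose lucky set is exactly `I` iff `i_{j+1} − i_j ≤ 2` for all `j ∈ [k]`;
moreover, when this condition holds, such a ranking is unique and `|I| = k ≥ ⌈n/2⌉`.
Here a car index `m : Fin n` corresponds to the car number `m + 1`, and `i : ℕ → ℕ`
enumerates the car numbers of `I` in increasing order. -/
theorem weakly_increasing_unit_fubini_lucky_set_characterization
    (n k : ℕ) (hn : 1 ≤ n) (hk : 1 ≤ k)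
    (I : Finset (Fin n)) (hI : I.card = k)
    (i : ℕ → ℕ)
    (hmono : ∀ a b : ℕ, 1 ≤ a → a < b → b ≤ k + 1 → i a < i b)
    (h1 : i 1 = 1) (hlast : i (k + 1) = n + 1)
    (hIdesc : ∀ m : Fin n, m ∈ I ↔ ∃ ℓ : ℕ, 1 ≤ ℓ ∧ ℓ ≤ k ∧ (m : ℕ) + 1 = i ℓ) :
    ((∃ α : Fin n → Fin n,
        IsFubini α ∧ IsUnit2 α ∧ Monotone α ∧ luckySet α = I) ↔
      ∀ j : ℕ, 1 ≤ j → j ≤ k → i (j + 1) - i j ≤ 2)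
    ∧ ((∀ j : ℕ, 1 ≤ j → j ≤ k → i (j + 1) - i j ≤ 2) →
        (∃! α : Fin n → Fin n,
            IsFubini α ∧ IsUnit2 α ∧ Monotone α ∧ luckySet α = I)
          ∧ (n + 1) / 2 ≤ k) := by
  have hi : EnumeratesCars i k I :=
    ⟨fun a ha b hb hab => hmono a b ha.1 hab hb.2, h1, hlast, hIdesc⟩
  obtain ⟨α, hα⟩ := exists_roundsDownTo hi.nonempty_inter_Iic
  have hranking : ∀ β : Fin n → Fin n,
      IsFubini β ∧ IsUnit2 β ∧ Monotone β ∧ luckySet β = I ↔ IsUnit2 β ∧ RoundsDownTo β I :=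
    fun β => by rw [and_left_comm, isFubini_and_monotone_and_luckySet_eq_iff_roundsDownTo]
  simp only [hranking]
  refine ⟨⟨?_, fun hgap => ⟨α, (hi.isUnit2_iff_forall_sub_le_two hα).2 hgap, hα⟩⟩, fun hgap => ?_⟩
  · rintro ⟨β, hunit, hβ⟩
    exact (hi.isUnit2_iff_forall_sub_le_two hβ).1 hunit
  · have hunit : IsUnit2 α := (hi.isUnit2_iff_forall_sub_le_two hα).2 hgap
    refine ⟨⟨α, ⟨hunit, hα⟩, fun β hβ => hβ.2.unique hα⟩, ?_⟩
    have hcard : n ≤ 2 * #I := hunit.le_two_mul_card hα.apply_mem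
    omega
end
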